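/- For every n ≥ 2 and every ε > 0 there exist a bounded open convex set Ω ⊂ ℝⁿ with nonempty interior and a positive convex function f on the closure of Ω such that (1/|Ω|) ∫_Ω f dx ≥ (n − 1 − ε) · (1/|∂Ω|) ∫_{∂Ω} f dσ. Consequently the optimal constant c_n in the Hermite–Hadamard inequality for positive convex (hence also for positive subharmonic) functions satisfies c_n ≥ n − 1. -/

import Mathlib

open MeasureTheory

open scoped NNReal ENNReal

namespace HH

abbrev E (m : ℕ) := EuclideanSpace ℝ (Fin m)

lemma exists_c (m : ℕ) : ∃ c : ℝ≥0, c ≠ 0 ∧ (μH[(m:ℝ)] : Measure (E m)) = c • volume := by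
  have h : (μH[(m:ℝ)] : Measure (E m)).IsAddHaarMeasure := by
    have := isAddHaarMeasure_hausdorffMeasure (E := E m)
    simpa using this
  refine ⟨_, ?_, Measure.isAddLeftInvariant_eq_smul (μH[(m:ℝ)] : Measure (E m)) volume⟩
  exact (Measure.addHaarScalarFactor_pos_of_isAddHaarMeasure _ _).ne'

/-- lift of a set to Euclidean space -/
def lft {m : ℕ} (A : Set (Fin m → ℝ)) : Set (E m) := (WithLp.ofLp) ⁻¹' A

lemma mp (m : ℕ) : MeasurePreserving (WithLp.ofLp : E m → (Fin m → ℝ)) :=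
  PiLp.volume_preserving_ofLp (Fin m)

lemma lint_lip {m : ℕ} {c : ℝ≥0} (hc : (μH[(m:ℝ)] : Measure (E m)) = c • volume)
    {K : ℝ≥0} {φ : E m → E (m+1)} (hφ : LipschitzWith K φ) {A : Set (Fin m → ℝ)}
    (hA : MeasurableSet A) {F : E (m+1) → ℝ≥0∞} (hF : Measurable F)
    {F0 : (Fin m → ℝ) → ℝ≥0∞} (hF0 : Measurable F0) (h : ∀ y, F (φ y) = F0 (WithLp.ofLp y)) :
    ∫⁻ x in φ '' (lft A), F x ∂μH[(m:ℝ)] ≤ (K:ℝ≥0∞)^m * (c * ∫⁻ y in A, F0 y) := by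
  have hle : (μH[(m:ℝ)] : Measure (E (m+1))).restrict (φ '' (lft A)) ≤
      ((K:ℝ≥0∞)^m) • Measure.map φ ((μH[(m:ℝ)] : Measure (E m)).restrict (lft A)) := by
    refine Measure.le_iff.2 fun S hS => ?_
    rw [Measure.restrict_apply hS, Measure.smul_apply, Measure.map_apply hφ.continuous.measurable hS,
      Measure.restrict_apply (hφ.continuous.measurable hS)]
    have : S ∩ φ '' lft A = φ '' (φ ⁻¹' S ∩ lft A) := by
      rw [Set.image_preimage_inter]
    rw [this]
    have := hφ.hausdorffMeasure_image_le (d := m) (Nat.cast_nonneg m) (φ ⁻¹' S ∩ lft A)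
    simpa using this
  calc _ ≤ ∫⁻ x, F x ∂(((K:ℝ≥0∞)^m) • Measure.map φ ((μH[(m:ℝ)] : Measure (E m)).restrict (lft A))) :=
        lintegral_mono' hle le_rfl
    _ = (K:ℝ≥0∞)^m * ∫⁻ y in lft A, F (φ y) ∂(μH[(m:ℝ)] : Measure (E m)) := by
        rw [lintegral_smul_measure, lintegral_map hF hφ.continuous.measurable, smul_eq_mul]
    _ = _ := by
        congr 1
        rw [hc, Measure.restrict_smul, lintegral_smul_measure]
        simp_rw [h]
        rw [lft, (mp m).setLIntegral_comp_preimage hA hF0]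
        rfl

lemma tl_lip (m : ℕ) : LipschitzWith 1
    (fun z : E (m+1) => (WithLp.toLp 2 (fun i : Fin m => z i.succ) : E m)) := by
  refine LipschitzWith.of_dist_le_mul fun x y => ?_
  rw [NNReal.coe_one, one_mul, EuclideanSpace.dist_eq, EuclideanSpace.dist_eq]
  apply Real.sqrt_le_sqrt
  rw [Fin.sum_univ_succ]
  have := sq_nonneg (dist (x.ofLp 0) (y.ofLp 0))
  simpa using this

def ins {m : ℕ} (i : Fin (m+1)) (y : E m) : E (m+1) :=
  WithLp.toLp 2 (i.insertNth (0:ℝ) (WithLp.ofLp y) : Fin (m+1) → ℝ)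

lemma ins_lip {m : ℕ} (i : Fin (m+1)) : LipschitzWith 1 (ins i) := by
  refine LipschitzWith.of_dist_le_mul fun x y => ?_
  rw [NNReal.coe_one, one_mul, EuclideanSpace.dist_eq, EuclideanSpace.dist_eq]
  apply Real.sqrt_le_sqrt
  rw [Fin.sum_univ_succAbove _ i]
  simp [ins]

def gr {m : ℕ} (η : ℝ) (y : E m) : E (m+1) :=
  WithLp.toLp 2 (Fin.cons (η * (1 - ‖WithLp.ofLp y‖)) (WithLp.ofLp y) : Fin (m+1) → ℝ)

lemma gr_lip {m : ℕ} (η : ℝ≥0) : LipschitzWith (1 + η) (gr (m := m) η) := by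
  refine LipschitzWith.of_dist_le_mul fun x y => ?_
  have h1 : dist (gr (η:ℝ) x) (gr (η:ℝ) y) =
      √((η * (1 - ‖WithLp.ofLp x‖) - η * (1 - ‖WithLp.ofLp y‖))^2 + (dist x y)^2) := by
    rw [EuclideanSpace.dist_eq, Fin.sum_univ_succ, EuclideanSpace.dist_eq x y, Real.sq_sqrt (by positivity)]
    simp [gr, Real.dist_eq, sq_abs]
  have h2 : |‖WithLp.ofLp x‖ - ‖WithLp.ofLp y‖| ≤ dist x y := by
    refine (abs_norm_sub_norm_le _ _).trans ?_
    have := (PiLp.lipschitzWith_ofLp 2 (fun _ : Fin m => ℝ)).dist_le_mul x y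
    rw [← dist_eq_norm]
    simpa using this
  have h3 : 0 ≤ dist x y := dist_nonneg
  have h4 : (0:ℝ) ≤ η := η.2
  rw [h1]
  apply Real.sqrt_le_iff.2
  push_cast
  refine ⟨by positivity, ?_⟩
  have h5 : (‖WithLp.ofLp x‖ - ‖WithLp.ofLp y‖)^2 ≤ (dist x y)^2 := by
    rw [← sq_abs]; gcongr
  have h6 := mul_le_mul_of_nonneg_left h5 (sq_nonneg (η:ℝ))
  have h7 : 0 ≤ (η:ℝ) * (dist x y)^2 := by positivity
  nlinarith

/-- the domain -/
def Om (m : ℕ) (η : ℝ) : Set (E (m+1)) :=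
  {z | 0 < z 0 ∧ (∀ i : Fin m, 0 < z i.succ) ∧ z 0 + η * ‖fun i : Fin m => z i.succ‖ < η}

def Cl (m : ℕ) (η : ℝ) : Set (E (m+1)) :=
  {z | 0 ≤ z 0 ∧ (∀ i : Fin m, 0 ≤ z i.succ) ∧ z 0 + η * ‖fun i : Fin m => z i.succ‖ ≤ η}

lemma cT (m : ℕ) : Continuous (fun z : E (m+1) => fun i : Fin m => z i.succ) := by fun_prop

lemma Om_open (m : ℕ) (η : ℝ) : IsOpen (Om m η) := by
  have h1 : IsOpen {z : E (m+1) | 0 < z 0} := isOpen_lt (by fun_prop) (by fun_prop)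
  have h2 : IsOpen {z : E (m+1) | ∀ i : Fin m, 0 < z i.succ} := by
    simp only [Set.ofPred_forall]
    exact isOpen_iInter_of_finite fun i => isOpen_lt (by fun_prop) (by fun_prop)
  have h3 : IsOpen {z : E (m+1) | z 0 + η * ‖fun i : Fin m => z i.succ‖ < η} := by
    have := (cT m).norm
    exact isOpen_lt (by fun_prop) (by fun_prop)
  exact h1.inter (h2.inter h3)

lemma Cl_closed (m : ℕ) (η : ℝ) : IsClosed (Cl m η) := by
  have h1 : IsClosed {z : E (m+1) | 0 ≤ z 0} := isClosed_le (by fun_prop) (by fun_prop)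
  have h2 : IsClosed {z : E (m+1) | ∀ i : Fin m, 0 ≤ z i.succ} := by
    simp only [Set.ofPred_forall]
    exact isClosed_iInter fun i => isClosed_le (by fun_prop) (by fun_prop)
  have h3 : IsClosed {z : E (m+1) | z 0 + η * ‖fun i : Fin m => z i.succ‖ ≤ η} := by
    have := (cT m).norm
    exact isClosed_le (by fun_prop) (by fun_prop)
  exact h1.inter (h2.inter h3)

lemma closure_sub (m : ℕ) (η : ℝ) : closure (Om m η) ⊆ Cl m η :=
  closure_minimal (fun _ hz => ⟨hz.1.le, fun i => (hz.2.1 i).le, hz.2.2.le⟩) (Cl_closed m η)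

lemma Om_convex (m : ℕ) {η : ℝ} (hη : 0 < η) : Convex ℝ (Om m η) := by
  rintro x ⟨hx0, hx1, hx2⟩ y ⟨hy0, hy1, hy2⟩ a b ha hb hab
  have pos : ∀ u v : ℝ, 0 < u → 0 < v → 0 < a * u + b * v := by
    intro u v hu hv
    rcases ha.eq_or_lt with rfl | ha
    · have : b = 1 := by linarith
      subst this; simpa using hv
    · have := mul_pos ha hu
      have := mul_nonneg hb hv.le
      linarith
  refine ⟨by simpa using pos _ _ hx0 hy0, fun i => by simpa using pos _ _ (hx1 i) (hy1 i), ?_⟩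
  have hn : ‖fun i : Fin m => (a • x + b • y : E (m+1)) i.succ‖ ≤
      a * ‖fun i : Fin m => x i.succ‖ + b * ‖fun i : Fin m => y i.succ‖ := by
    have := norm_add_le (a • fun i : Fin m => x i.succ) (b • fun i : Fin m => y i.succ)
    rw [norm_smul, norm_smul, Real.norm_of_nonneg ha, Real.norm_of_nonneg hb] at this
    exact this
  have h := pos _ _ (sub_pos.2 hx2) (sub_pos.2 hy2)
  have hn' := mul_le_mul_of_nonneg_left hn hη.le
  have h0 : (a • x + b • y : E (m+1)) 0 = a * x 0 + b * y 0 := by simp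
  rw [h0]
  have : b = 1 - a := by linarith
  subst this
  nlinarith

lemma Cl_bd {m : ℕ} {η : ℝ} (hη : 0 < η) {z : E (m+1)} (hz : z ∈ Cl m η) :
    z 0 ≤ η ∧ ‖fun i : Fin m => z i.succ‖ ≤ 1 ∧ ∀ i : Fin m, z i.succ ≤ 1 := by
  obtain ⟨h0, h1, h2⟩ := hz
  have h3 := norm_nonneg (fun i : Fin m => z i.succ)
  have h4 : ‖fun i : Fin m => z i.succ‖ ≤ 1 := by
    by_contra! h
    nlinarith
  refine ⟨by nlinarith, h4, fun i => ?_⟩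
  exact (le_abs_self _).trans ((norm_le_pi_norm (fun i : Fin m => z i.succ) i).trans h4)

lemma Om_bdd (m : ℕ) {η : ℝ} (hη : 0 < η) : Bornology.IsBounded (Om m η) := by
  have : Om m η ⊆ (WithLp.ofLp : E (m+1) → _) ⁻¹' (Metric.closedBall 0 (1 + η)) := by
    intro z hz
    have hz' := closure_sub m η (subset_closure hz)
    have hb := Cl_bd hη hz'
    simp only [Set.mem_preimage, mem_closedBall_zero_iff]
    rw [pi_norm_le_iff_of_nonneg (by linarith)]
    intro i
    rw [Real.norm_eq_abs, abs_le]
    refine Fin.cases ?_ (fun j => ?_) i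
    · exact ⟨by linarith [hz'.1], by linarith [hb.1]⟩
    · exact ⟨by linarith [hz'.2.1 j], by linarith [hb.2.2 j]⟩
  refine Bornology.IsBounded.subset ?_ this
  exact (PiLp.antilipschitzWith_ofLp 2 (fun _ : Fin (m+1) => ℝ)).isBounded_preimage Metric.isBounded_closedBall


lemma Om_nonempty (m : ℕ) {η : ℝ} (hη : 0 < η) : (Om m η).Nonempty := by
  refine ⟨WithLp.toLp 2 (Fin.cons (η / 4) (fun _ => 1 / 2) : Fin (m+1) → ℝ), ?_, ?_, ?_⟩
  · simp; positivity
  · intro i; simp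
  · have : ‖fun _ : Fin m => (1/2 : ℝ)‖ ≤ 1 / 2 := by
      rw [pi_norm_le_iff_of_nonneg (by norm_num)]
      intro i; norm_num
    have h2 := mul_le_mul_of_nonneg_left this hη.le
    simp only [Fin.cons_zero, Fin.cons_succ]
    linarith

lemma mpΨ (m : ℕ) : MeasurePreserving (fun z : E (m+1) => (z 0, fun i : Fin m => z i.succ)) := by
  have h := (volume_preserving_piFinSuccAbove (fun _ : Fin (m+1) => ℝ) 0).comp (mp (m+1))
  exact h

lemma Om_vol_le (m : ℕ) {η : ℝ} (hη : 0 < η) : volume (Om m η) ≤ ENNReal.ofReal (η / (m+1)) := by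
  let P : Set (ℝ × (Fin m → ℝ)) := {p | 0 < p.1 ∧ (∀ i, 0 < p.2 i) ∧ p.1 + η * ‖p.2‖ < η}
  have hP : MeasurableSet P := by
    have a1 : MeasurableSet {p : ℝ × (Fin m → ℝ) | 0 < p.1} := measurableSet_lt (by fun_prop) (by fun_prop)
    have a2 : MeasurableSet {p : ℝ × (Fin m → ℝ) | p.1 + η * ‖p.2‖ < η} :=
      measurableSet_lt (by fun_prop) (by fun_prop)
    refine a1.inter (MeasurableSet.inter ?_ a2)
    change MeasurableSet {p : ℝ × (Fin m → ℝ) | ∀ i, 0 < p.2 i}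
    simp only [Set.ofPred_forall]
    exact MeasurableSet.iInter fun i => measurableSet_lt (by fun_prop) (by fun_prop)
  have h1 : Om m η = (fun z : E (m+1) => (z 0, fun i : Fin m => z i.succ)) ⁻¹' P := rfl
  rw [h1, (mpΨ m).measure_preimage hP.nullMeasurableSet, Measure.volume_eq_prod, Measure.prod_apply hP]
  calc ∫⁻ x, volume (Prod.mk x ⁻¹' P)
      ≤ ∫⁻ x, (Set.Ioc 0 η).indicator (fun x => ENNReal.ofReal ((1 - x / η)^m)) x := by
        refine lintegral_mono fun x => ?_
        by_cases hx : x ∈ Set.Ioc 0 η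
        · rw [Set.indicator_of_mem hx]
          have hx1 : 0 ≤ 1 - x / η := by
            have := (div_le_one hη).2 hx.2
            linarith
          have hs : Prod.mk x ⁻¹' P ⊆ Set.Icc (fun _ => 0) (fun _ => 1 - x / η) := by
            rintro y ⟨_, h2, h3⟩
            refine ⟨fun i => (h2 i).le, fun i => ?_⟩
            have h4 : y i ≤ ‖y‖ := (le_abs_self _).trans (norm_le_pi_norm y i)
            have h5 := mul_le_mul_of_nonneg_left h4 hη.le
            simp only at h3 ⊢
            rw [le_sub_iff_add_le, ← sub_nonneg]
            have : 1 - (y i + x / η) = (η - η * y i - x) / η := by field_simp; ring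
            rw [this]
            apply div_nonneg _ hη.le
            linarith
          refine (measure_mono hs).trans ?_
          rw [Real.volume_Icc_pi]
          simp [ENNReal.ofReal_pow hx1]
        · rw [Set.indicator_of_notMem hx]
          have : Prod.mk x ⁻¹' P = ∅ := by
            ext y
            simp only [Set.mem_preimage, Set.mem_empty_iff_false, iff_false]
            rintro ⟨h2, _, h3⟩
            apply hx
            simp only at h2 h3
            have := mul_nonneg hη.le (norm_nonneg y)
            exact ⟨h2, by linarith⟩
          simp [this]
    _ = ∫⁻ x in Set.Ioc 0 η, ENNReal.ofReal ((1 - x / η)^m) := lintegral_indicator measurableSet_Ioc _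
    _ = ENNReal.ofReal (∫ x in Set.Ioc 0 η, (1 - x / η)^m) := by
        rw [ofReal_integral_eq_lintegral_ofReal]
        · exact (Continuous.integrableOn_Icc (by fun_prop)).mono_set Set.Ioc_subset_Icc_self
        · refine (ae_restrict_iff' measurableSet_Ioc).2 (ae_of_all _ fun x hx => ?_)
          have := (div_le_one hη).2 hx.2
          exact pow_nonneg (by linarith) _
    _ = ENNReal.ofReal (η / (m+1)) := by
        rw [← intervalIntegral.integral_of_le hη.le]
        congr 1
        have hd : ∀ x ∈ Set.uIcc 0 η, HasDerivAt (fun x : ℝ => -(η / (m+1)) * (1 - x / η)^(m+1)) ((1 - x / η)^m) x := by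
          intro x _
          have := (((hasDerivAt_id x).div_const η).const_sub 1).pow (m+1) |>.const_mul (-(η / (m+1)))
          have hm1 : (m:ℝ) + 1 ≠ 0 := by positivity
          have e : -(η / ((m:ℝ) + 1)) * (((m + 1 : ℕ) : ℝ) * (1 - id x / η) ^ (m + 1 - 1) * -(1 / η)) = (1 - x / η) ^ m := by
            simp only [id, Nat.add_sub_cancel]
            push_cast
            field_simp
          rw [e] at this
          exact this
        rw [intervalIntegral.integral_eq_sub_of_hasDerivAt hd (Continuous.intervalIntegrable (by fun_prop) _ _)]
        simp [hη.ne']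

def g0 (m : ℕ) (y : Fin m → ℝ) : ℝ := max (1 - (m+1) * ∑ i, y i) 0

def ff (m : ℕ) (τ : ℝ) (z : E (m+1)) : ℝ := g0 m (fun i => z i.succ) + τ

lemma g0_cont (m : ℕ) : Continuous (g0 m) := by unfold g0; fun_prop

lemma g0_nonneg (m : ℕ) (y : Fin m → ℝ) : 0 ≤ g0 m y := le_max_right _ _

lemma ff_cont (m : ℕ) (τ : ℝ) : Continuous (ff m τ) := ((g0_cont m).comp (cT m)).add continuous_const

lemma ff_convex (m : ℕ) (τ : ℝ) : ConvexOn ℝ Set.univ (ff m τ) := by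
  refine ⟨convex_univ, fun x _ y _ a b ha hb hab => ?_⟩
  have h0 := g0_nonneg m (fun i => x i.succ)
  have h0' := g0_nonneg m (fun i => y i.succ)
  have h1 : 1 - (m+1) * ∑ i : Fin m, x i.succ ≤ g0 m (fun i => x i.succ) := le_max_left _ _
  have h2 : 1 - (m+1) * ∑ i : Fin m, y i.succ ≤ g0 m (fun i => y i.succ) := le_max_left _ _
  have h3 : ff m τ (a • x + b • y) ≤ (a * g0 m (fun i => x i.succ) + b * g0 m (fun i => y i.succ)) + τ := by
    unfold ff
    gcongr
    conv_lhs => unfold g0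
    apply max_le
    · have : ∑ i : Fin m, (a • x + b • y : E (m+1)) i.succ = a * ∑ i : Fin m, x i.succ + b * ∑ i : Fin m, y i.succ := by
        simp [Finset.sum_add_distrib, Finset.mul_sum]
      rw [this]
      have h4 := mul_le_mul_of_nonneg_left h1 ha
      have h5 := mul_le_mul_of_nonneg_left h2 hb
      have : b = 1 - a := by linarith
      subst this
      linarith
    · positivity
  refine h3.trans (le_of_eq ?_)
  simp only [ff, smul_eq_mul]
  have : b = 1 - a := by linarith
  subst this
  ring

def D (m : ℕ) : Set (Fin m → ℝ) := Set.univ.pi fun _ => Set.Ioo 0 1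

lemma D_ae (m : ℕ) : (D m : Set _) =ᵐ[volume] Set.Icc (fun _ : Fin m => (0:ℝ)) (fun _ => 1) :=
  Measure.univ_pi_Ioo_ae_eq_Icc

lemma D_open (m : ℕ) : IsOpen (D m) := isOpen_set_pi Set.finite_univ fun _ _ => isOpen_Ioo

lemma D_vol (m : ℕ) : volume (D m) = 1 := by simp [D, Real.volume_pi_Ioo]

noncomputable def JJ (m : ℕ) : ℝ≥0∞ := ∫⁻ y in D m, ENNReal.ofReal (g0 m y)

lemma g0_le_one {m : ℕ} {y : Fin m → ℝ} (h : ∀ i, 0 ≤ y i) : g0 m y ≤ 1 := by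
  have := Finset.sum_nonneg fun i (_ : i ∈ Finset.univ) => h i
  have h2 : 0 ≤ ((m:ℝ)+1) * ∑ i, y i := by positivity
  exact max_le (by linarith) (by norm_num)

lemma JJ_le (m : ℕ) : JJ m ≤ 1 := by
  calc JJ m ≤ ∫⁻ y in D m, 1 := by
        refine setLIntegral_mono' (D_open m).measurableSet fun y hy => ?_
        have := g0_le_one (m := m) (y := y) fun i => (hy i trivial).1.le
        simpa using this
    _ = 1 := by simp [D_vol]

lemma JJ_pos (m : ℕ) : 0 < JJ m := by
  unfold JJ
  rw [setLIntegral_pos_iff (g0_cont m).measurable.ennreal_ofReal]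
  have hopen : IsOpen ({y : Fin m → ℝ | 0 < 1 - ((m:ℝ)+1) * ∑ i, y i} ∩ D m) :=
    (isOpen_lt (by fun_prop) (by fun_prop)).inter (D_open m)
  refine (hopen.measure_pos volume ⟨fun _ => 1/(m+1)^2/2, ?_, ?_⟩).trans_le (measure_mono ?_)
  · have : (0:ℝ) < m + 1 := by positivity
    simp only [Set.mem_ofPred_eq, Finset.sum_const, Finset.card_univ, Fintype.card_fin, nsmul_eq_mul]
    have h : 1 - ((m:ℝ)+1) * (m * (1/(m+1)^2/2)) = (m + 2) / (2 * (m+1)) := by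
      field_simp; ring
    rw [h]; positivity
  · intro i _
    refine ⟨by positivity, ?_⟩
    have : (1:ℝ) ≤ (m+1)^2 := one_le_pow₀ (by linarith [Nat.cast_nonneg (α := ℝ) m])
    have := (div_le_one (by positivity)).2 this
    simp only at this ⊢
    linarith
  · refine Set.inter_subset_inter_left _ fun y hy => ?_
    have : 0 < g0 m y := lt_max_of_lt_left hy
    simpa using this

lemma Om_int (m : ℕ) {η τ : ℝ} (hη : 0 < η) (hτ : 0 < τ) :
    ENNReal.ofReal (η * (m / (m+1))) * JJ m ≤ ∫⁻ z in Om m η, ENNReal.ofReal (ff m τ z) := by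
  let A : Set (Fin m → ℝ) := D m ∩ {y | ∑ i, y i < 1 / (m+1)}
  have hm : (0:ℝ) < m + 1 := by positivity
  have hA : MeasurableSet A := (D_open m).measurableSet.inter (measurableSet_lt (by fun_prop) (by fun_prop))
  have hJ : JJ m ≤ ∫⁻ y in A, ENNReal.ofReal (g0 m y) := by
    unfold JJ
    rw [← lintegral_indicator (D_open m).measurableSet, ← lintegral_indicator hA]
    refine lintegral_mono fun y => ?_
    by_cases hy : y ∈ D m
    · by_cases hy2 : ∑ i, y i < 1 / (m+1)
      · rw [Set.indicator_of_mem hy, Set.indicator_of_mem (show y ∈ A from ⟨hy, hy2⟩)]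
      · have : g0 m y = 0 := by
          apply max_eq_right
          push Not at hy2
          rw [div_le_iff₀ hm] at hy2
          linarith
        rw [Set.indicator_of_mem hy, this]; simp
    · rw [Set.indicator_of_notMem hy]; simp
  have hsub : (fun z : E (m+1) => (z 0, fun i : Fin m => z i.succ)) ⁻¹' (Set.Ioo 0 (η * (m / (m+1))) ×ˢ A) ⊆ Om m η := by
    rintro z ⟨⟨h1, h2⟩, h3, h4⟩
    simp only at h1 h2 h3 h4
    refine ⟨h1, fun i => (h3 i trivial).1, ?_⟩
    have h5 : ‖fun i : Fin m => z i.succ‖ ≤ 1 / (m+1) := by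
      rw [pi_norm_le_iff_of_nonneg (by positivity)]
      intro i
      rw [Real.norm_of_nonneg (h3 i trivial).1.le]
      refine le_trans ?_ (le_of_lt h4)
      exact Finset.single_le_sum (f := fun i : Fin m => z i.succ) (fun j _ => (h3 j trivial).1.le) (Finset.mem_univ i)
    have h6 := mul_le_mul_of_nonneg_left h5 hη.le
    have : η * (m / (m+1)) + η * (1 / (m+1)) = η := by field_simp
    linarith
  calc _ ≤ ENNReal.ofReal (η * (m / (m+1))) * ∫⁻ y in A, ENNReal.ofReal (g0 m y) := by gcongr
    _ = ∫⁻ p in Set.Ioo 0 (η * (m / (m+1))) ×ˢ A, ENNReal.ofReal (g0 m p.2) := by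
      rw [Measure.volume_eq_prod, setLIntegral_prod _ (by
        exact ((g0_cont m).measurable.comp measurable_snd).ennreal_ofReal.aemeasurable)]
      simp [mul_comm]
    _ = ∫⁻ z in (fun z : E (m+1) => (z 0, fun i : Fin m => z i.succ)) ⁻¹' (Set.Ioo 0 (η * (m / (m+1))) ×ˢ A),
          ENNReal.ofReal (g0 m (fun i : Fin m => z i.succ)) := by
      rw [← (mpΨ m).setLIntegral_comp_preimage (measurableSet_Ioo.prod hA)]
      exact ((g0_cont m).measurable.comp measurable_snd).ennreal_ofReal
    _ ≤ ∫⁻ z in Om m η, ENNReal.ofReal (g0 m (fun i : Fin m => z i.succ)) := lintegral_mono_set hsub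
    _ ≤ _ := by
      refine lintegral_mono fun z => ENNReal.ofReal_le_ofReal ?_
      unfold ff; linarith

lemma c_le {m : ℕ} {c : ℝ≥0} (hc : (μH[(m:ℝ)] : Measure (E m)) = c • volume)
    {φ : E m → E (m+1)} (h : ∀ y, (WithLp.toLp 2 (fun i : Fin m => (φ y) i.succ) : E m) = y) :
    (c : ℝ≥0∞) ≤ μH[(m:ℝ)] (φ '' lft (D m)) := by
  have h1 := (tl_lip m).hausdorffMeasure_image_le (d := m) (Nat.cast_nonneg m) (φ '' lft (D m))
  rw [Set.image_image] at h1
  simp only [h, Set.image_id', hc] at h1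
  have : volume (lft (D m)) = 1 := by
    rw [lft, (mp m).measure_preimage (D_open m).measurableSet.nullMeasurableSet, D_vol]
  simpa [this] using h1

lemma ins0 {m : ℕ} (y : E m) : (ins 0 y) 0 = 0 := by simp [ins]
lemma ins0s {m : ℕ} (y : E m) (i : Fin m) : (ins 0 y) i.succ = y i := by
  have := Fin.insertNth_apply_succAbove (α := fun _ => ℝ) 0 (0:ℝ) (WithLp.ofLp y) i
  simpa [ins] using this
lemma gr0 {m : ℕ} (η : ℝ) (y : E m) : (gr η y) 0 = η * (1 - ‖WithLp.ofLp y‖) := by simp [gr]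
lemma grs {m : ℕ} (η : ℝ) (y : E m) (i : Fin m) : (gr η y) i.succ = y i := by simp [gr]

lemma D_norm {m : ℕ} {y : Fin m → ℝ} (hy : y ∈ D m) : ‖y‖ < 1 := by
  rw [pi_norm_lt_iff (by norm_num)]
  intro i
  rw [Real.norm_of_nonneg (hy i trivial).1.le]
  exact (hy i trivial).2

lemma mem_cl {m : ℕ} {η : ℝ} (hη : 0 < η) {z : E (m+1)} (h0 : 0 ≤ z 0)
    (h1 : (fun i : Fin m => z i.succ) ∈ D m) (h2 : z 0 + η * ‖fun i : Fin m => z i.succ‖ ≤ η) :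
    z ∈ closure (Om m η) := by
  let w : E (m+1) := WithLp.toLp 2 (Fin.cons (η * (1 - ‖fun i : Fin m => z i.succ‖) / 2) (fun i : Fin m => z i.succ) : Fin (m+1) → ℝ)
  have hw0 : w 0 = η * (1 - ‖fun i : Fin m => z i.succ‖) / 2 := by simp [w]
  have hws : ∀ i : Fin m, w i.succ = z i.succ := by simp [w]
  have hN := mul_pos hη (sub_pos.2 (D_norm h1))
  have hseq : Filter.Tendsto (fun t : ℝ => z + t • (w - z)) (nhdsWithin 0 (Set.Ioo 0 1)) (nhds z) := by
    have : Filter.Tendsto (fun t : ℝ => z + t • (w - z)) (nhds 0) (nhds (z + (0:ℝ) • (w - z))) :=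
      Continuous.tendsto (by fun_prop) _
    rw [zero_smul, add_zero] at this
    exact this.mono_left nhdsWithin_le_nhds
  have : (nhdsWithin (0:ℝ) (Set.Ioo 0 1)).NeBot := by
    rw [nhdsWithin_Ioo_eq_nhdsGT (by norm_num)]; infer_instance
  refine mem_closure_of_tendsto hseq (Filter.eventually_of_mem self_mem_nhdsWithin fun t ht => ?_)
  have hs : ∀ i : Fin m, (z + t • (w - z)) i.succ = z i.succ := by
    intro i; simp [hws]
  have h00 : (z + t • (w - z)) 0 = (1 - t) * z 0 + t * w 0 := by
    simp; ring
  refine ⟨?_, fun i => ?_, ?_⟩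
  · rw [h00, hw0]
    have := mul_nonneg (sub_nonneg.2 ht.2.le) h0
    have := mul_pos ht.1 hN
    linarith
  · rw [hs]; exact (h1 i trivial).1
  · simp_rw [hs]
    rw [h00, hw0]
    have := mul_le_mul_of_nonneg_left h2 (sub_nonneg.2 ht.2.le)
    have := mul_pos ht.1 hN
    nlinarith

lemma fr_lower {m : ℕ} {c : ℝ≥0} (hc : (μH[(m:ℝ)] : Measure (E m)) = c • volume) {η : ℝ} (hη : 0 < η) :
    2 * (c : ℝ≥0∞) ≤ μH[(m:ℝ)] (frontier (Om m η)) := by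
  let H : Set (E (m+1)) := {z | z 0 = 0}
  have hH : MeasurableSet H := (isClosed_eq (by fun_prop) (by fun_prop) : IsClosed H).measurableSet
  have hi : ∀ y : E m, (fun i : Fin m => (ins 0 y) i.succ) = WithLp.ofLp y := fun y => funext fun i => ins0s y i
  have hg : ∀ y : E m, (fun i : Fin m => (gr η y) i.succ) = WithLp.ofLp y := fun y => funext fun i => grs η y i
  rw [← measure_inter_add_diff _ hH, two_mul, (Om_open m η).frontier_eq]
  refine add_le_add ((c_le hc (φ := ins 0) fun y => ?_).trans (measure_mono ?_))
    ((c_le hc (φ := gr η) fun y => ?_).trans (measure_mono ?_))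
  · rw [hi]
  · rintro _ ⟨y, hy, rfl⟩
    refine ⟨⟨mem_cl hη (ins0 y).ge ?_ ?_, fun h => ?_⟩, ins0 y⟩
    · rw [hi]; exact hy
    · rw [ins0, hi, zero_add]
      have := mul_le_mul_of_nonneg_left (D_norm hy).le hη.le
      simpa using this
    · exact absurd h.1 (by rw [ins0]; exact lt_irrefl _)
  · rw [hg]
  · rintro _ ⟨y, hy, rfl⟩
    have hN := mul_pos hη (sub_pos.2 (D_norm hy))
    refine ⟨⟨mem_cl hη ?_ ?_ ?_, fun h => ?_⟩, fun h => ?_⟩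
    · rw [gr0]; exact hN.le
    · rw [hg]; exact hy
    · rw [hg, gr0]; linarith
    · have := h.2.2
      rw [hg, gr0] at this; linarith
    · have : (gr η y) 0 = 0 := h
      rw [gr0] at this; exact hN.ne' this

def bx (m : ℕ) (η : ℝ) : Set (Fin m → ℝ) := Set.Icc (fun _ => 0) (fun j => if j.val = 0 then η else 1)

lemma bx_vol {m : ℕ} (hm : m ≠ 0) (η : ℝ) : volume (bx m η) = ENNReal.ofReal η := by
  obtain ⟨k, rfl⟩ := Nat.exists_eq_succ_of_ne_zero hm
  rw [bx, Real.volume_Icc_pi, Fin.prod_univ_succ]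
  simp

lemma fr_sub {m : ℕ} {η : ℝ} (hη : 0 < η) : frontier (Om m η) ⊆
    (ins 0 '' lft (Set.Icc (fun _ : Fin m => (0:ℝ)) (fun _ => 1)) ∪
     gr η '' lft (Set.Icc (fun _ : Fin m => (0:ℝ)) (fun _ => 1))) ∪
    ⋃ i : Fin m, Cl m η ∩ {z | z i.succ = 0} := by
  intro z hz
  rw [(Om_open m η).frontier_eq] at hz
  have hc := closure_sub m η hz.1
  have hb := Cl_bd hη hc
  by_cases h0 : z 0 = 0
  · refine Or.inl (Or.inl ⟨WithLp.toLp 2 (fun i : Fin m => z i.succ), ⟨hc.2.1, hb.2.2⟩, ?_⟩)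
    ext j
    refine Fin.cases ?_ (fun i => ?_) j
    · rw [ins0, h0]
    · rw [ins0s]
  by_cases h1 : ∃ i : Fin m, z i.succ = 0
  · obtain ⟨i, hi⟩ := h1
    exact Or.inr (Set.mem_iUnion.2 ⟨i, hc, hi⟩)
  push Not at h1
  have h2 : z 0 + η * ‖fun i : Fin m => z i.succ‖ = η := by
    by_contra h
    exact hz.2 ⟨lt_of_le_of_ne hc.1 (Ne.symm h0), fun i => lt_of_le_of_ne (hc.2.1 i) (h1 i).symm,
      lt_of_le_of_ne hc.2.2 h⟩
  refine Or.inl (Or.inr ⟨WithLp.toLp 2 (fun i : Fin m => z i.succ), ⟨hc.2.1, hb.2.2⟩, ?_⟩)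
  ext j
  refine Fin.cases ?_ (fun i => ?_) j
  · rw [gr0]; simp only; linarith
  · rw [grs]

lemma side_sub {m : ℕ} {η : ℝ} (hη : 0 < η) (i : Fin m) :
    Cl m η ∩ {z | z i.succ = 0} ⊆ ins i.succ '' lft (bx m η) := by
  rintro z ⟨hz, hi⟩
  have hb := Cl_bd hη hz
  have hz' : ∀ j, 0 ≤ z j := fun j => Fin.cases hz.1 hz.2.1 j
  refine ⟨WithLp.toLp 2 (Fin.removeNth i.succ (WithLp.ofLp z)), ⟨fun j => hz' _, fun j => ?_⟩, ?_⟩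
  · simp only [Fin.removeNth]
    split_ifs with hj
    · have : i.succ.succAbove j = 0 := by
        rw [Fin.succAbove_of_castSucc_lt]
        · ext; simpa using hj
        · rw [Fin.lt_def]; simp [hj]
      rw [this]; exact hb.1
    · have : i.succ.succAbove j ≠ 0 := by
        intro h
        rw [Fin.succAbove] at h
        split_ifs at h
        · exact hj (by simpa using congrArg Fin.val h)
        · exact absurd h (Fin.succ_ne_zero j)
      obtain ⟨k, hk⟩ := Fin.exists_succ_eq.2 this
      rw [← hk]; exact hb.2.2 k
  · have hi' : WithLp.ofLp z i.succ = 0 := hi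
    have := Fin.insertNth_self_removeNth i.succ (WithLp.ofLp z)
    rw [hi'] at this
    simp only [ins]
    rw [this]

lemma fr_upper {m : ℕ} (hm : m ≠ 0) {c : ℝ≥0} (hc : (μH[(m:ℝ)] : Measure (E m)) = c • volume)
    {η : ℝ≥0} (hη : 0 < η) {τ : ℝ} (hτ : 0 < τ) :
    ∫⁻ z in frontier (Om m η), ENNReal.ofReal (ff m τ z) ∂μH[(m:ℝ)] ≤
      (1 + (1 + (η:ℝ≥0∞))^m) * (c * (JJ m + ENNReal.ofReal τ)) + m * (c * (ENNReal.ofReal (1 + τ) * η)) := by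
  have hη' : (0:ℝ) < η := hη
  have hF : Measurable (fun z => ENNReal.ofReal (ff m τ z)) := (ff_cont m τ).measurable.ennreal_ofReal
  have hF0 : Measurable (fun y => ENNReal.ofReal (g0 m y + τ)) :=
    ((g0_cont m).add continuous_const).measurable.ennreal_ofReal
  have hD : ∫⁻ y in Set.Icc (fun _ : Fin m => (0:ℝ)) (fun _ => 1), ENNReal.ofReal (g0 m y + τ) = JJ m + ENNReal.ofReal τ := by
    rw [← setLIntegral_congr (D_ae m)]
    simp_rw [ENNReal.ofReal_add (g0_nonneg m _) hτ.le]
    rw [lintegral_add_right _ measurable_const, JJ]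
    simp [D_vol]
  have e1 := lint_lip hc (ins_lip (m := m) 0) (A := Set.Icc (fun _ : Fin m => (0:ℝ)) (fun _ => 1))
    measurableSet_Icc hF hF0 (fun y => by
      have : (fun i : Fin m => (ins 0 y) i.succ) = WithLp.ofLp y := funext fun i => ins0s y i
      simp only [ff, this])
  have e2 := lint_lip hc (gr_lip (m := m) η) (A := Set.Icc (fun _ : Fin m => (0:ℝ)) (fun _ => 1))
    measurableSet_Icc hF hF0 (fun y => by
      have : (fun i : Fin m => (gr η y) i.succ) = WithLp.ofLp y := funext fun i => grs η y i
      simp only [ff, this])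
  rw [hD] at e1 e2
  have e3 : ∀ i : Fin m, ∫⁻ z in Cl m η ∩ {z | z i.succ = 0}, ENNReal.ofReal (ff m τ z) ∂μH[(m:ℝ)] ≤
      c * (ENNReal.ofReal (1 + τ) * η) := by
    intro i
    have hcl : IsClosed {z : E (m+1) | z i.succ = 0} := isClosed_eq (by fun_prop) (by fun_prop)
    have h := lint_lip hc (ins_lip i.succ) (A := bx m η) measurableSet_Icc
      (F := fun _ => ENNReal.ofReal (1 + τ)) measurable_const (F0 := fun _ => ENNReal.ofReal (1 + τ))
      measurable_const (fun _ => rfl)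
    calc _ ≤ ∫⁻ z in Cl m η ∩ {z | z i.succ = 0}, ENNReal.ofReal (1 + τ) ∂μH[(m:ℝ)] := by
          refine setLIntegral_mono' ((Cl_closed m η).inter hcl).measurableSet fun z hz => ?_
          refine ENNReal.ofReal_le_ofReal ?_
          unfold ff
          have := g0_le_one (m := m) (y := fun i => z i.succ) hz.1.2.1
          linarith
      _ ≤ _ := lintegral_mono_set (side_sub hη' i)
      _ ≤ _ := h
      _ = _ := by
          rw [setLIntegral_const, bx_vol hm]
          simp
  calc _ ≤ _ := lintegral_mono_set (fr_sub hη')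
    _ ≤ _ := lintegral_union_le _ _ _
    _ ≤ _ := add_le_add ((lintegral_union_le _ _ _).trans (add_le_add e1 e2))
        ((lintegral_iUnion_le _ _).trans (ENNReal.tsum_le_tsum e3))
    _ = _ := by
      rw [tsum_fintype]
      simp
      ring

lemma fr_fin {m : ℕ} (hm : m ≠ 0) {c : ℝ≥0} (hc : (μH[(m:ℝ)] : Measure (E m)) = c • volume)
    {η : ℝ≥0} (hη : 0 < η) : μH[(m:ℝ)] (frontier (Om m η)) < ⊤ := by
  have h := fr_upper hm hc hη (τ := 1) one_pos
  have h1 : μH[(m:ℝ)] (frontier (Om m η)) ≤ ∫⁻ z in frontier (Om m η), ENNReal.ofReal (ff m 1 z) ∂μH[(m:ℝ)] := by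
    rw [← setLIntegral_one]
    refine lintegral_mono fun z => ?_
    have := g0_nonneg m (fun i => z i.succ)
    simp [ff, this]
  refine (h1.trans h).trans_lt ?_
  have : JJ m ≠ ⊤ := ne_top_of_le_ne_top ENNReal.one_ne_top (JJ_le m)
  finiteness

lemma main {m : ℕ} (hm : m ≠ 0) {ε : ℝ} (hε : 0 < ε) :
    ∃ (Ω : Set (E (m+1))) (f : E (m+1) → ℝ),
      IsOpen Ω ∧ Bornology.IsBounded Ω ∧ Convex ℝ Ω ∧ (interior Ω).Nonempty ∧
      ConvexOn ℝ (closure Ω) f ∧ (∀ x ∈ closure Ω, 0 < f x) ∧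
      ((m : ℝ) - ε) *
          ((1 / (μH[(m : ℝ)] (frontier Ω)).toReal) *
            ∫ x in frontier Ω, f x ∂μH[(m : ℝ)]) ≤
        (1 / (volume Ω).toReal) * ∫ x in Ω, f x := by
  obtain ⟨c, hc0, hc⟩ := exists_c m
  have hcpos : (0:ℝ) < c := by
    have : 0 < c := pos_iff_ne_zero.2 hc0
    exact_mod_cast this
  have hJt : JJ m ≠ ⊤ := ne_top_of_le_ne_top ENNReal.one_ne_top (JJ_le m)
  set J : ℝ := (JJ m).toReal with hJ
  have hJpos : 0 < J := ENNReal.toReal_pos (JJ_pos m).ne' hJt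
  have hm0 : (0:ℝ) < m := by exact_mod_cast Nat.pos_of_ne_zero hm
  obtain ⟨η, hη, hsmall⟩ : ∃ η : ℝ, 0 < η ∧
      ((m:ℝ) - ε) * (((1 + (1 + η)^m) * (J + η) + m * ((1 + η) * η)) / 2) < m * J := by
    have ht : Filter.Tendsto (fun η : ℝ => ((m:ℝ) - ε) * (((1 + (1 + η)^m) * (J + η) + m * ((1 + η) * η)) / 2))
        (nhdsWithin 0 (Set.Ioi 0)) (nhds (((m:ℝ) - ε) * (((1 + (1 + 0)^m) * (J + 0) + m * ((1 + 0) * 0)) / 2))) :=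
      (Continuous.tendsto (by fun_prop) _).mono_left nhdsWithin_le_nhds
    have hlt : ((m:ℝ) - ε) * (((1 + (1 + 0)^m) * (J + 0) + m * ((1 + 0) * 0)) / 2) < m * J := by
      simp
      nlinarith
    obtain ⟨η, h1, h2⟩ := ((ht.eventually (gt_mem_nhds hlt)).and self_mem_nhdsWithin).exists
    exact ⟨η, h2, h1⟩
  lift η to ℝ≥0 using hη.le
  have hη' : 0 < η := by exact_mod_cast hη
  have hpos : ∀ z, 0 < ff m η z := fun z => add_pos_of_nonneg_of_pos (g0_nonneg m _) hη
  refine ⟨Om m η, ff m η, Om_open m η, Om_bdd m hη, Om_convex m hη, ?_,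
    (ff_convex m η).subset (Set.subset_univ _) (Om_convex m hη).closure, fun z _ => hpos z, ?_⟩
  · rw [(Om_open m η).interior_eq]; exact Om_nonempty m hη
  have hvt : volume (Om m η) ≠ ⊤ := ne_top_of_le_ne_top ENNReal.ofReal_ne_top (Om_vol_le m hη)
  have hv0 : 0 < (volume (Om m η)).toReal :=
    ENNReal.toReal_pos ((Om_open m η).measure_pos volume (Om_nonempty m hη)).ne' hvt
  have hv1 : (volume (Om m η)).toReal ≤ η / (m+1) := ENNReal.toReal_le_of_le_ofReal (by positivity) (Om_vol_le m hη)
  -- interior integral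
  have hI : η * (m / (m+1)) * J ≤ ∫ x in Om m η, ff m η x := by
    rw [integral_eq_lintegral_of_nonneg_ae (ae_of_all _ fun z => (hpos z).le) (ff_cont m η).aestronglyMeasurable]
    have h := ENNReal.toReal_mono ?_ (Om_int m hη hη)
    · rw [ENNReal.toReal_mul, ENNReal.toReal_ofReal (by positivity)] at h
      exact h
    · have hle : ∫⁻ z in Om m η, ENNReal.ofReal (ff m η z) ≤ ∫⁻ z in Om m η, ENNReal.ofReal (1 + η) := by
        refine setLIntegral_mono' (Om_open m η).measurableSet fun z hz => ENNReal.ofReal_le_ofReal ?_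
        have := g0_le_one (m := m) (y := fun i => z i.succ) fun i => (hz.2.1 i).le
        unfold ff; linarith
      refine ne_top_of_le_ne_top ?_ hle
      rw [setLIntegral_const]
      finiteness
  have hR : m * J ≤ (1 / (volume (Om m η)).toReal) * ∫ x in Om m η, ff m η x := by
    have h1 : (m+1) / η ≤ 1 / (volume (Om m η)).toReal := by
      rw [div_le_div_iff₀ hη hv0]
      rw [le_div_iff₀ (by positivity)] at hv1
      linarith
    calc (m:ℝ) * J = (m+1) / η * (η * (m / (m+1)) * J) := by field_simp
      _ ≤ _ := by gcongr
  -- boundary integral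
  set B := (((1 + (1 + (η:ℝ))^m) * (J + η) + m * ((1 + η) * η)) / 2) with hB
  have hBI : ∫ x in frontier (Om m η), ff m η x ∂μH[(m:ℝ)] ≤ 2 * c * B := by
    rw [integral_eq_lintegral_of_nonneg_ae (ae_of_all _ fun z => (hpos z).le) (ff_cont m η).aestronglyMeasurable]
    have h := ENNReal.toReal_mono (by finiteness) (fr_upper hm hc hη' hη)
    refine h.trans (le_of_eq ?_)
    rw [ENNReal.toReal_add (by finiteness) (by finiteness)]
    simp only [ENNReal.toReal_mul]
    rw [ENNReal.toReal_add hJt (by finiteness), ENNReal.toReal_add (by finiteness) (by finiteness),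
      ENNReal.toReal_pow, ENNReal.toReal_add (by finiteness) (by finiteness),
      ENNReal.toReal_ofReal hη.le, ENNReal.toReal_ofReal (by positivity)]
    simp only [ENNReal.toReal_one, ENNReal.coe_toReal, ENNReal.toReal_natCast, ← hJ, hB]
    ring
  have hBm : 2 * c ≤ (μH[(m:ℝ)] (frontier (Om m η))).toReal := by
    have h := ENNReal.toReal_mono (fr_fin hm hc hη').ne (fr_lower hc hη)
    simpa using h
  have hI0 : 0 ≤ ∫ x in frontier (Om m η), ff m η x ∂μH[(m:ℝ)] :=
    integral_nonneg fun z => (hpos z).le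
  have hmean0 : 0 ≤ (1 / (μH[(m : ℝ)] (frontier (Om m η))).toReal) *
      ∫ x in frontier (Om m η), ff m η x ∂μH[(m:ℝ)] := by positivity
  have hmean : (1 / (μH[(m : ℝ)] (frontier (Om m η))).toReal) *
      ∫ x in frontier (Om m η), ff m η x ∂μH[(m:ℝ)] ≤ B := by
    have h2c : (0:ℝ) < 2 * c := by positivity
    rw [one_div, inv_mul_le_iff₀ (h2c.trans_le hBm)]
    refine hBI.trans ?_
    have : 0 ≤ B := by rw [hB]; positivity
    gcongr
  refine le_trans ?_ hR
  rcases le_total ((m:ℝ) - ε) 0 with h | h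
  · exact (mul_nonpos_of_nonpos_of_nonneg h hmean0).trans (by positivity)
  · exact (mul_le_mul_of_nonneg_left hmean h).trans hsmall.le

end HH

/-- Lower bound for the optimal Hermite–Hadamard constant: in every dimension `n ≥ 2`
and for every `ε > 0` there is a bounded open convex domain `Ω ⊂ ℝⁿ` and a positive
convex function `f` on its closure whose mean over `Ω` is at least `(n - 1 - ε)` times
its mean over `∂Ω`. Hence the optimal constant `c_n` satisfies `c_n ≥ n - 1`. -/
theorem hermite_hadamard_constant_lower_bound
    (n : ℕ) (hn : 2 ≤ n) (ε : ℝ) (hε : 0 < ε) :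
    ∃ (Ω : Set (EuclideanSpace ℝ (Fin n))) (f : EuclideanSpace ℝ (Fin n) → ℝ),
      IsOpen Ω ∧ Bornology.IsBounded Ω ∧ Convex ℝ Ω ∧ (interior Ω).Nonempty ∧
      ConvexOn ℝ (closure Ω) f ∧ (∀ x ∈ closure Ω, 0 < f x) ∧
      ((n : ℝ) - 1 - ε) *
          ((1 / (μH[(n : ℝ) - 1] (frontier Ω)).toReal) *
            ∫ x in frontier Ω, f x ∂μH[(n : ℝ) - 1]) ≤
        (1 / (volume Ω).toReal) * ∫ x in Ω, f x := by
  obtain ⟨m, rfl⟩ : ∃ m, n = m + 1 := ⟨n - 1, by omega⟩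
  have h := HH.main (m := m) (by omega) hε
  have e : ((m + 1 : ℕ) : ℝ) - 1 = m := by push_cast; ring
  rw [e]
  exact h
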